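/- arXiv:1802.05507 — 7 statements merged into one kernel-verified Lean document; each statement's English description precedes it below -/
import Mathlib

section
/- Let 𝔟 ∈ ℝ⁶ satisfy ⟨𝔟, 𝔟⟩ = 0, 𝔟⁰ = 0, and suppose 𝔟 is not a scalar multiple of ε₅. Then 𝔟¹ + 𝔟⁴ ≠ 0, and there exist a unique unit vector n = (n¹,n²,n³) ∈ S² and a unique h ∈ ℝ such that 𝔟 = (𝔟¹+𝔟⁴) · (0, (1+n¹)/2, n²/√2, n³/√2, (1−n¹)/2, h/√2). Hence every point of the orbit Q_Π represents a unique oriented plane Π_h(n) = {x ∈ ℝ³ : nᵀx = h} of Euclidean space. -/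
/-- The scalar product of signature (4,2) on `ℝ⁶`. -/
def lprod (a b : Fin 6 → ℝ) : ℝ :=
  -(a 0 * b 5 + a 5 * b 0) - (a 1 * b 4 + a 4 * b 1) + a 2 * b 2 + a 3 * b 3

/-- The basis vector `ε₅` of `ℝ⁶`. -/
def eps5 : Fin 6 → ℝ := ![0, 0, 0, 0, 0, 1]

/-- The vector `(0, (1+n¹)/2, n²/√2, n³/√2, (1−n¹)/2, h/√2) ∈ ℝ⁶`
representing the oriented plane `Π_h(n)` with unit normal `n` and height `h`. -/
noncomputable def plVecH (n : Fin 3 → ℝ) (h : ℝ) : Fin 6 → ℝ :=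
  ![0, (1 + n 0) / 2, n 1 / Real.sqrt 2, n 2 / Real.sqrt 2, (1 - n 0) / 2,
    h / Real.sqrt 2]

/-- A null vector orthogonal to `ε₅` with `𝔟¹ + 𝔟⁴ = 0` is a multiple of `ε₅`. -/
theorem eq_smul_eps5_of_add_eq_zero (b : Fin 6 → ℝ) (hnull : lprod b b = 0) (hb0 : b 0 = 0)
    (hs : b 1 + b 4 = 0) : b = b 5 • eps5 := by
  have h4 : b 4 = -b 1 := by linarith
  simp only [lprod, hb0, h4] at hnull
  have h1 : b 1 = 0 := by nlinarith [sq_nonneg (b 1), sq_nonneg (b 2), sq_nonneg (b 3)]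
  have h2 : b 2 = 0 := by nlinarith [sq_nonneg (b 1), sq_nonneg (b 2), sq_nonneg (b 3)]
  have h3 : b 3 = 0 := by nlinarith [sq_nonneg (b 1), sq_nonneg (b 2), sq_nonneg (b 3)]
  funext i
  fin_cases i <;> simp [eps5, hb0, h1, h2, h3, h4]

/-- If `𝔟 ∈ ℝ⁶` is null, `𝔟⁰ = 0`, and `𝔟` is not a scalar multiple of `ε₅`, then
`𝔟¹ + 𝔟⁴ ≠ 0` and there is a unique pair `(n, h)` with `n` a unit vector such that
`𝔟 = (𝔟¹+𝔟⁴) · (0, (1+n¹)/2, n²/√2, n³/√2, (1−n¹)/2, h/√2)`: every point of the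
orbit `Q_Π` represents a unique oriented plane `Π_h(n)`. -/
theorem stmt5 (b : Fin 6 → ℝ) (hnull : lprod b b = 0) (hb0 : b 0 = 0)
    (hne : ∀ c : ℝ, b ≠ c • eps5) :
    b 1 + b 4 ≠ 0 ∧
    ∃! nh : (Fin 3 → ℝ) × ℝ,
      (nh.1 0) ^ 2 + (nh.1 1) ^ 2 + (nh.1 2) ^ 2 = 1 ∧
      b = (b 1 + b 4) • plVecH nh.1 nh.2 := by
  have hs : b 1 + b 4 ≠ 0 := fun hs => hne _ (eq_smul_eps5_of_add_eq_zero b hnull hb0 hs)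
  have hr : √(2 : ℝ) ≠ 0 := by positivity
  have hr2 : √(2 : ℝ) ^ 2 = 2 := Real.sq_sqrt zero_le_two
  refine ⟨hs, (![(b 1 - b 4) / (b 1 + b 4), √2 * b 2 / (b 1 + b 4), √2 * b 3 / (b 1 + b 4)],
    √2 * b 5 / (b 1 + b 4)), ⟨?_, ?_⟩, ?_⟩
  · simp only [lprod, hb0] at hnull
    simp only [Matrix.cons_val]
    field_simp
    rw [hr2]
    linarith
  · funext i
    fin_cases i <;> simp [plVecH, hb0] <;> field_simp <;> ring
  · rintro ⟨n, h⟩ ⟨-, hb⟩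
    have h1 := congrFun hb 1
    have h2 := congrFun hb 2
    have h3 := congrFun hb 3
    have h5 := congrFun hb 5
    simp only [plVecH, Pi.smul_apply, smul_eq_mul, Matrix.cons_val] at h1 h2 h3 h5
    field_simp at h1 h2 h3 h5
    ext i
    · fin_cases i <;> simp <;> field_simp <;> linarith
    · simp only
      field_simp
      linarith
end

section
/- Let B ∈ M₄(ℝ) satisfy Bᵀ ηₗ B = ηₗ. Then for every V ∈ ℝ⁴ the matrix A(B;V) satisfies A(B;V)ᵀ η A(B;V) = η, A(B;V) ε₅ = ε₅, and det A(B;V) = det B. In particular, if B is a restricted Lorentz transformation then A(B;V) belongs to the Laguerre group. -/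
open Matrix

/-- The Lorentz scalar product on `ℝ⁴`: `(V,W) = −V⁰W⁰ + V¹W¹ + V²W² + V³W³`. -/
def mprod (V W : Fin 4 → ℝ) : ℝ :=
  -(V 0 * W 0) + V 1 * W 1 + V 2 * W 2 + V 3 * W 3

/-- The Gram matrix `η` of the signature-(4,2) scalar product
`⟨𝔞,𝔟⟩ = −(𝔞⁰𝔟⁵ + 𝔞⁵𝔟⁰) − (𝔞¹𝔟⁴ + 𝔞⁴𝔟¹) + 𝔞²𝔟² + 𝔞³𝔟³` on `ℝ⁶`. -/
def etaM : Matrix (Fin 6) (Fin 6) ℝ :=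
  !![0, 0, 0, 0, 0, -1;
     0, 0, 0, 0, -1, 0;
     0, 0, 1, 0, 0, 0;
     0, 0, 0, 1, 0, 0;
     0, -1, 0, 0, 0, 0;
     -1, 0, 0, 0, 0, 0]

/-- The Gram matrix `ηₗ = diag(−1,1,1,1)` of the Lorentz product on `ℝ⁴`. -/
def etaL : Matrix (Fin 4) (Fin 4) ℝ :=
  !![-1, 0, 0, 0;
     0, 1, 0, 0;
     0, 0, 1, 0;
     0, 0, 0, 1]

/-- The matrix `K`. -/
noncomputable def Kmat : Matrix (Fin 4) (Fin 4) ℝ :=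
  !![1 / Real.sqrt 2, 1 / Real.sqrt 2, 0, 0;
     0, 0, 1, 0;
     0, 0, 0, 1;
     1 / Real.sqrt 2, -(1 / Real.sqrt 2), 0, 0]

/-- The matrix `K⁻¹`. -/
noncomputable def KmatInv : Matrix (Fin 4) (Fin 4) ℝ :=
  !![1 / Real.sqrt 2, 0, 0, 1 / Real.sqrt 2;
     1 / Real.sqrt 2, 0, 0, -(1 / Real.sqrt 2);
     0, 1, 0, 0;
     0, 0, 1, 0]

/-- The row vector `*Ṽ = (−Ṽ³, Ṽ¹, Ṽ², −Ṽ⁰)`, acting on `W` by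
`*Ṽ(W) = −(Ṽ⁰W³ + Ṽ³W⁰) + Ṽ¹W¹ + Ṽ²W²`. -/
def starV (Vt : Fin 4 → ℝ) : Fin 4 → ℝ := ![-(Vt 3), Vt 1, Vt 2, -(Vt 0)]

/-- The element `A(B;V) ∈ M₆(ℝ)` of the Laguerre group: the block matrix with block
rows `(1, 0, 0)`, `(Ṽ, B̃, 0)`, `((V,V)/2, *Ṽ·B̃, 1)`, where `Ṽ = KV`, `B̃ = KBK⁻¹`. -/
noncomputable def AofBV (B : Matrix (Fin 4) (Fin 4) ℝ) (V : Fin 4 → ℝ) :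
    Matrix (Fin 6) (Fin 6) ℝ := fun i j =>
  let Vt : Fin 4 → ℝ := Kmat.mulVec V
  let Bt : Matrix (Fin 4) (Fin 4) ℝ := Kmat * B * KmatInv
  if hi0 : i.val = 0 then (if j.val = 0 then 1 else 0)
  else if hi : i.val ≤ 4 then
    if hj0 : j.val = 0 then Vt ⟨i.val - 1, by omega⟩
    else if hj : j.val ≤ 4 then Bt ⟨i.val - 1, by omega⟩ ⟨j.val - 1, by omega⟩
    else 0
  else
    if hj0 : j.val = 0 then mprod V V / 2
    else if hj : j.val ≤ 4 then Matrix.vecMul (starV Vt) Bt ⟨j.val - 1, by omega⟩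
    else 1

/-- The Gram matrix of the Lorentz product in the basis given by `K`. -/
def etaNull : Matrix (Fin 4) (Fin 4) ℝ :=
  !![0, 0, 0, -1;
     0, 1, 0, 0;
     0, 0, 1, 0;
     -1, 0, 0, 0]

theorem inv_sqrt_two_mul_self : (√2)⁻¹ * (√2)⁻¹ = (1 / 2 : ℝ) := by
  rw [← mul_inv, Real.mul_self_sqrt (by norm_num), one_div]

theorem Kmat_mul_KmatInv : Kmat * KmatInv = 1 := by
  ext i j
  fin_cases i <;> fin_cases j <;>
    simp [Kmat, KmatInv, Matrix.mul_apply, Fin.sum_univ_four, inv_sqrt_two_mul_self] <;> norm_num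

theorem Kmat_transpose_mul_etaNull_mul_Kmat : Kmatᵀ * etaNull * Kmat = etaL := by
  ext i j
  fin_cases i <;> fin_cases j <;>
    simp [Kmat, etaNull, etaL, Matrix.mul_apply, Fin.sum_univ_four, inv_sqrt_two_mul_self] <;>
    norm_num

theorem KmatInv_transpose_mul_etaL_mul_KmatInv : KmatInvᵀ * etaL * KmatInv = etaNull := by
  have h : Kmatᵀ * etaNull * Kmat = etaL := Kmat_transpose_mul_etaNull_mul_Kmat
  calc KmatInvᵀ * etaL * KmatInv
      = (Kmat * KmatInv)ᵀ * etaNull * (Kmat * KmatInv) := by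
        rw [← h]; simp only [Matrix.transpose_mul, Matrix.mul_assoc]
    _ = etaNull := by simp [Kmat_mul_KmatInv]

/-- Conjugation by `K` carries Lorentz matrices to isometries of `etaNull`. -/
theorem conj_Kmat_isometry {B : Matrix (Fin 4) (Fin 4) ℝ} (hB : Bᵀ * etaL * B = etaL) :
    (Kmat * B * KmatInv)ᵀ * etaNull * (Kmat * B * KmatInv) = etaNull := by
  calc (Kmat * B * KmatInv)ᵀ * etaNull * (Kmat * B * KmatInv)
      = KmatInvᵀ * (Bᵀ * (Kmatᵀ * etaNull * Kmat) * B) * KmatInv := by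
        simp only [Matrix.transpose_mul, Matrix.mul_assoc]
    _ = etaNull := by
        rw [Kmat_transpose_mul_etaNull_mul_Kmat, hB, KmatInv_transpose_mul_etaL_mul_KmatInv]

theorem det_conj_Kmat (B : Matrix (Fin 4) (Fin 4) ℝ) : (Kmat * B * KmatInv).det = B.det := by
  have h := congrArg Matrix.det Kmat_mul_KmatInv
  rw [Matrix.det_mul, Matrix.det_one] at h
  rw [Matrix.det_mul, Matrix.det_mul]
  linear_combination B.det * h

theorem mprod_self_eq_starV_dotProduct (V : Fin 4 → ℝ) :
    mprod V V = starV (Kmat *ᵥ V) ⬝ᵥ (Kmat *ᵥ V) := by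
  simp [mprod, starV, Kmat, Matrix.mulVec, dotProduct, Fin.sum_univ_four]
  linear_combination (2 * V 0 ^ 2 - 2 * V 1 ^ 2) * inv_sqrt_two_mul_self

/-- The block matrix with block rows `(1, 0, 0)`, `(w, M, 0)`, `(*w·w/2, *w·M, 1)`. -/
noncomputable def laguerreBlock (M : Matrix (Fin 4) (Fin 4) ℝ) (w : Fin 4 → ℝ) :
    Matrix (Fin 6) (Fin 6) ℝ :=
  !![1, 0, 0, 0, 0, 0;
     w 0, M 0 0, M 0 1, M 0 2, M 0 3, 0;
     w 1, M 1 0, M 1 1, M 1 2, M 1 3, 0;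
     w 2, M 2 0, M 2 1, M 2 2, M 2 3, 0;
     w 3, M 3 0, M 3 1, M 3 2, M 3 3, 0;
     (starV w ⬝ᵥ w) / 2, (starV w ᵥ* M) 0, (starV w ᵥ* M) 1, (starV w ᵥ* M) 2,
       (starV w ᵥ* M) 3, 1]

theorem AofBV_eq_laguerreBlock (B : Matrix (Fin 4) (Fin 4) ℝ) (V : Fin 4 → ℝ) :
    AofBV B V = laguerreBlock (Kmat * B * KmatInv) (Kmat *ᵥ V) := by
  rw [laguerreBlock, ← mprod_self_eq_starV_dotProduct]
  ext i j
  fin_cases i <;> fin_cases j <;> rfl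

theorem laguerreBlock_isometry {M : Matrix (Fin 4) (Fin 4) ℝ}
    (hM : Mᵀ * etaNull * M = etaNull) (w : Fin 4 → ℝ) :
    (laguerreBlock M w)ᵀ * etaM * laguerreBlock M w = etaM := by
  have h : ∀ i j, -(M 3 i * M 0 j) + M 1 i * M 1 j + M 2 i * M 2 j + -(M 0 i * M 3 j)
      = etaNull i j := by
    intro i j
    rw [← hM]
    simp [etaNull, Matrix.mul_apply, Fin.sum_univ_four]
  ext i j
  fin_cases i <;> fin_cases j <;>
    simp [laguerreBlock, etaM, starV, Matrix.mul_apply, Matrix.vecMul, dotProduct,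
      Fin.sum_univ_six, Fin.sum_univ_four]
  all_goals first | ring1 | simp [h, etaNull]

theorem laguerreBlock_mulVec_eps5 (M : Matrix (Fin 4) (Fin 4) ℝ) (w : Fin 4 → ℝ) :
    laguerreBlock M w *ᵥ eps5 = eps5 := by
  ext i
  fin_cases i <;> simp [laguerreBlock, eps5, Matrix.mulVec, dotProduct, Fin.sum_univ_six]

theorem det_laguerreBlock (M : Matrix (Fin 4) (Fin 4) ℝ) (w : Fin 4 → ℝ) :
    (laguerreBlock M w).det = M.det := by
  have hrow : (laguerreBlock M w).det =
      ((laguerreBlock M w).submatrix Fin.succ Fin.succ).det := by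
    rw [Matrix.det_succ_row_zero, Fin.sum_univ_succ]
    simp [laguerreBlock, Fin.sum_univ_five]
  have hcol : ((laguerreBlock M w).submatrix Fin.succ Fin.succ).det =
      (((laguerreBlock M w).submatrix Fin.succ Fin.succ).submatrix
        Fin.castSucc Fin.castSucc).det := by
    rw [Matrix.det_succ_column _ (Fin.last 4), Fin.sum_univ_castSucc]
    simp [laguerreBlock, Fin.sum_univ_four]
    rw [show (4 : Fin 5) = Fin.last 4 from rfl, Fin.succAbove_last]
    norm_num
  rw [hrow, hcol]
  congr 1
  ext i j
  fin_cases i <;> fin_cases j <;> rfl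

/-- If `Bᵀ ηₗ B = ηₗ`, then for every `V ∈ ℝ⁴` the matrix `A(B;V)` satisfies
`A(B;V)ᵀ η A(B;V) = η`, `A(B;V) ε₅ = ε₅`, and `det A(B;V) = det B`. In particular,
if `B` is a restricted Lorentz transformation then `A(B;V)` belongs to the Laguerre
group. -/
theorem stmt9 (B : Matrix (Fin 4) (Fin 4) ℝ) (hB : Bᵀ * etaL * B = etaL)
    (V : Fin 4 → ℝ) :
    (AofBV B V)ᵀ * etaM * AofBV B V = etaM ∧
    (AofBV B V).mulVec eps5 = eps5 ∧
    (AofBV B V).det = B.det := by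
  rw [AofBV_eq_laguerreBlock]
  exact ⟨laguerreBlock_isometry (conj_Kmat_isometry hB) _, laguerreBlock_mulVec_eps5 _ _,
    (det_laguerreBlock _ _).trans (det_conj_Kmat B)⟩
end

section
/- Let B, B' ∈ M₄(ℝ) satisfy Bᵀ ηₗ B = ηₗ and B'ᵀ ηₗ B' = ηₗ. Then for all V, V' ∈ ℝ⁴ one has A(B;V) · A(B';V') = A(BB'; V + BV'). Moreover A(B;V) = A(B';V') implies B = B' and V = V'. Hence (B;V) ↦ A(B;V) is an injective group homomorphism from the Poincaré group G₆ ⋉ ℝ⁴ into the Laguerre group. -/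
open Matrix

theorem KmatInv_mul_Kmat : KmatInv * Kmat = 1 :=
  mul_eq_one_comm.mp Kmat_mul_KmatInv

theorem mprod_eq_dotProduct (V W : Fin 4 → ℝ) : mprod V W = (V ᵥ* etaL) ⬝ᵥ W := by
  simp [mprod, etaL, Matrix.vecMul, dotProduct, Fin.sum_univ_four]

/-- The row vector `*Ṽ` is the covector of `V` in the coordinates given by `K`. -/
theorem starV_Kmat_mulVec (V : Fin 4 → ℝ) :
    starV (Kmat *ᵥ V) = V ᵥ* (etaL * KmatInv) := by
  ext i
  fin_cases i <;>
    simp [starV, Kmat, KmatInv, etaL, Matrix.vecMul, Matrix.mulVec, dotProduct,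
      Matrix.mul_apply, Fin.sum_univ_four] <;> ring

theorem starV_vecMul_conj (B : Matrix (Fin 4) (Fin 4) ℝ) (V : Fin 4 → ℝ) :
    starV (Kmat *ᵥ V) ᵥ* (Kmat * B * KmatInv) = V ᵥ* (etaL * B * KmatInv) := by
  rw [starV_Kmat_mulVec, Matrix.vecMul_vecMul]
  congr 1
  calc etaL * KmatInv * (Kmat * B * KmatInv)
      = etaL * (KmatInv * Kmat) * B * KmatInv := by simp only [Matrix.mul_assoc]
    _ = etaL * B * KmatInv := by rw [KmatInv_mul_Kmat, Matrix.mul_one]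

theorem conj_Kmat_mul (B B' : Matrix (Fin 4) (Fin 4) ℝ) :
    Kmat * B * KmatInv * (Kmat * B' * KmatInv) = Kmat * (B * B') * KmatInv := by
  calc Kmat * B * KmatInv * (Kmat * B' * KmatInv)
      = Kmat * B * (KmatInv * Kmat) * B' * KmatInv := by simp only [Matrix.mul_assoc]
    _ = Kmat * (B * B') * KmatInv := by
      rw [KmatInv_mul_Kmat, Matrix.mul_one, Matrix.mul_assoc Kmat]

section Entries

variable (B : Matrix (Fin 4) (Fin 4) ℝ) (V : Fin 4 → ℝ) (i j : Fin 4)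

theorem AofBV_zero_zero : AofBV B V 0 0 = 1 := by simp [AofBV]

theorem AofBV_zero_succ (k : Fin 5) : AofBV B V 0 k.succ = 0 := by simp [AofBV]

theorem AofBV_mid_zero : AofBV B V i.castSucc.succ 0 = (Kmat *ᵥ V) i := by
  simp [AofBV]

theorem AofBV_mid_mid :
    AofBV B V i.castSucc.succ j.castSucc.succ = (Kmat * B * KmatInv) i j := by
  simp [AofBV]

theorem AofBV_mid_last : AofBV B V i.castSucc.succ (Fin.last 4).succ = 0 := by
  simp [AofBV]

theorem AofBV_last_zero : AofBV B V (Fin.last 4).succ 0 = mprod V V / 2 := by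
  simp [AofBV]

theorem AofBV_last_mid :
    AofBV B V (Fin.last 4).succ j.castSucc.succ = (V ᵥ* (etaL * B * KmatInv)) j := by
  rw [← starV_vecMul_conj]
  simp [AofBV]

theorem AofBV_last_last : AofBV B V (Fin.last 4).succ (Fin.last 4).succ = 1 := by
  simp [AofBV]

end Entries

/-- A Lorentz transformation turns the covector of `B V'` back into that of `V'`. -/
theorem mulVec_vecMul_etaL_mul {B : Matrix (Fin 4) (Fin 4) ℝ} (hB : Bᵀ * etaL * B = etaL)
    (V' : Fin 4 → ℝ) : (B *ᵥ V') ᵥ* (etaL * B) = V' ᵥ* etaL := by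
  rw [← Matrix.vecMul_transpose, Matrix.vecMul_vecMul, ← Matrix.mul_assoc, hB]

theorem mprod_add_mulVec {B : Matrix (Fin 4) (Fin 4) ℝ} (hB : Bᵀ * etaL * B = etaL)
    (V V' : Fin 4 → ℝ) :
    mprod (V + B *ᵥ V') (V + B *ᵥ V') =
      mprod V V + 2 * mprod V (B *ᵥ V') + mprod V' V' := by
  have hinv : mprod (B *ᵥ V') (B *ᵥ V') = mprod V' V' := by
    simp only [mprod_eq_dotProduct, Matrix.dotProduct_mulVec, Matrix.vecMul_vecMul,
      mulVec_vecMul_etaL_mul hB]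
  rw [← hinv]
  simp only [mprod, Pi.add_apply]
  ring

theorem AofBV_mul {B : Matrix (Fin 4) (Fin 4) ℝ} (hB : Bᵀ * etaL * B = etaL)
    (B' : Matrix (Fin 4) (Fin 4) ℝ) (V V' : Fin 4 → ℝ) :
    AofBV B V * AofBV B' V' = AofBV (B * B') (V + B *ᵥ V') := by
  ext i j
  rw [Matrix.mul_apply, Fin.sum_univ_succ, Fin.sum_univ_castSucc]
  induction i using Fin.cases with
  | zero =>
    induction j using Fin.cases <;> simp only [AofBV_zero_zero, AofBV_zero_succ] <;> simp
  | succ i =>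
    induction i using Fin.lastCases with
    | last =>
      induction j using Fin.cases with
      | zero =>
        simp only [AofBV_zero_zero, AofBV_mid_zero, AofBV_last_zero, AofBV_last_mid,
          AofBV_last_last, mprod_add_mulVec hB]
        have hsum : (V ᵥ* (etaL * B * KmatInv)) ⬝ᵥ (Kmat *ᵥ V') = mprod V (B *ᵥ V') := by
          rw [Matrix.dotProduct_mulVec, Matrix.vecMul_vecMul, Matrix.mul_assoc,
            KmatInv_mul_Kmat, Matrix.mul_one, mprod_eq_dotProduct, Matrix.dotProduct_mulVec,
            Matrix.vecMul_vecMul]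
        rw [dotProduct] at hsum
        rw [hsum]
        ring
      | succ j =>
        induction j using Fin.lastCases with
        | last =>
          simp only [AofBV_zero_succ, AofBV_mid_last, AofBV_last_last]
          simp
        | cast j =>
          simp only [AofBV_zero_succ, AofBV_mid_mid, AofBV_last_mid, AofBV_last_last]
          have hsum : (V ᵥ* (etaL * B * KmatInv)) ᵥ* (Kmat * B' * KmatInv) +
              V' ᵥ* (etaL * B' * KmatInv) =
              (V + B *ᵥ V') ᵥ* (etaL * (B * B') * KmatInv) := by
            have hV : V ᵥ* (etaL * B * KmatInv) ᵥ* (Kmat * B' * KmatInv) =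
                V ᵥ* (etaL * (B * B') * KmatInv) := by
              rw [← starV_vecMul_conj, Matrix.vecMul_vecMul, conj_Kmat_mul, starV_vecMul_conj]
            rw [hV, Matrix.add_vecMul, ← Matrix.mul_assoc etaL B B', Matrix.mul_assoc etaL B',
              Matrix.mul_assoc (etaL * B) B', ← Matrix.vecMul_vecMul (B *ᵥ V'),
              mulVec_vecMul_etaL_mul hB, Matrix.vecMul_vecMul]
          rw [← hsum]
          simp [Matrix.vecMul, dotProduct, -Matrix.vecMul_vecMul]
    | cast i =>
      induction j using Fin.cases with
      | zero =>
        simp only [AofBV_zero_zero, AofBV_mid_zero, AofBV_mid_mid, AofBV_mid_last]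
        have hsum : Kmat *ᵥ V + (Kmat * B * KmatInv) *ᵥ (Kmat *ᵥ V') =
            Kmat *ᵥ (V + B *ᵥ V') := by
          rw [Matrix.mulVec_mulVec, Matrix.mul_assoc, KmatInv_mul_Kmat, Matrix.mul_one,
            Matrix.mulVec_add, Matrix.mulVec_mulVec]
        rw [← hsum]
        simp [Matrix.mulVec, dotProduct, -Matrix.mulVec_mulVec]
      | succ j =>
        induction j using Fin.lastCases with
        | last =>
          simp only [AofBV_zero_succ, AofBV_mid_last]
          simp
        | cast j =>
          simp only [AofBV_zero_succ, AofBV_mid_mid, AofBV_mid_last]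
          rw [← conj_Kmat_mul, Matrix.mul_apply]
          simp

theorem AofBV_injective {B B' : Matrix (Fin 4) (Fin 4) ℝ} {V V' : Fin 4 → ℝ}
    (h : AofBV B V = AofBV B' V') : B = B' ∧ V = V' := by
  have hV : Kmat *ᵥ V = Kmat *ᵥ V' := by
    ext i
    rw [← AofBV_mid_zero B, h, AofBV_mid_zero]
  have hB : Kmat * B * KmatInv = Kmat * B' * KmatInv := by
    ext i j
    rw [← AofBV_mid_mid B V, h, AofBV_mid_mid]
  have conj_cancel (C : Matrix (Fin 4) (Fin 4) ℝ) :
      KmatInv * (Kmat * C * KmatInv) * Kmat = C := by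
    calc KmatInv * (Kmat * C * KmatInv) * Kmat
        = (KmatInv * Kmat) * C * (KmatInv * Kmat) := by simp only [Matrix.mul_assoc]
      _ = C := by rw [KmatInv_mul_Kmat, Matrix.one_mul, Matrix.mul_one]
  constructor
  · rw [← conj_cancel B, hB, conj_cancel]
  · rw [← Matrix.one_mulVec V, ← KmatInv_mul_Kmat, ← Matrix.mulVec_mulVec, hV,
      Matrix.mulVec_mulVec, KmatInv_mul_Kmat, Matrix.one_mulVec]

/-- If `B` and `B'` are Lorentz transformations, then
`A(B;V) · A(B';V') = A(BB'; V + BV')` for all `V, V'`, and `A(B;V) = A(B';V')`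
implies `B = B'` and `V = V'`: the map `(B;V) ↦ A(B;V)` is an injective group
homomorphism from the Poincaré group `G₆ ⋉ ℝ⁴` into the Laguerre group. -/
theorem stmt10 (B B' : Matrix (Fin 4) (Fin 4) ℝ)
    (hB : Bᵀ * etaL * B = etaL) (hB' : B'ᵀ * etaL * B' = etaL) :
    (∀ V V' : Fin 4 → ℝ,
      AofBV B V * AofBV B' V' = AofBV (B * B') (V + B.mulVec V')) ∧
    (∀ V V' : Fin 4 → ℝ, AofBV B V = AofBV B' V' → B = B' ∧ V = V') := by
  exact ⟨AofBV_mul hB B', fun _ _ => AofBV_injective⟩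
end

section
/- The set 𝔩 = {a ∈ M₆(ℝ) : aᵀ η + η a = 0 and a ε₅ = 0} is a Lie subalgebra of 𝔤𝔩(6,ℝ) (it is a linear subspace closed under the matrix commutator), and dim_ℝ 𝔩 = 10. Explicitly, a ∈ 𝔩 if and only if its entire first row vanishes, its last column vanishes, and its remaining entries are determined by the ten parameters a¹₀, a²₀, a³₀, a⁴₀, a¹₁, a¹₂, a¹₃, a²₁, a³₁, a³₂ through the relations a²₂ = a³₃ = a⁵₅ = 0, a⁴₄ = −a¹₁, a²₃ = −a³₂, a⁴₂ = a²₁, a⁴₃ = a³₁, a²₄ = a¹₂, a³₄ = a¹₃, a⁵₁ = −a⁴₀, a⁵₂ = a²₀, a⁵₃ = a³₀, a⁵₄ = −a¹₀, a¹₄ = a⁴₁ = a⁵₀ = 0. -/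
open Matrix

/-- The set `𝔩 = {a ∈ M₆(ℝ) : aᵀ η + η a = 0, a ε₅ = 0}`, the Lie algebra of the
Laguerre group. -/
def lagSet : Set (Matrix (Fin 6) (Fin 6) ℝ) :=
  {a | aᵀ * etaM + etaM * a = 0 ∧ a.mulVec eps5 = 0}

theorem mem_lagSet_iff (a : Matrix (Fin 6) (Fin 6) ℝ) : a ∈ lagSet ↔
      ((∀ j, a 0 j = 0) ∧ (∀ i, a i 5 = 0) ∧
       a 1 4 = 0 ∧ a 4 1 = 0 ∧ a 5 0 = 0 ∧
       a 2 2 = 0 ∧ a 3 3 = 0 ∧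
       a 4 4 = -(a 1 1) ∧ a 2 3 = -(a 3 2) ∧
       a 4 2 = a 2 1 ∧ a 4 3 = a 3 1 ∧
       a 2 4 = a 1 2 ∧ a 3 4 = a 1 3 ∧
       a 5 1 = -(a 4 0) ∧ a 5 2 = a 2 0 ∧ a 5 3 = a 3 0 ∧ a 5 4 = -(a 1 0)) := by
  simp only [lagSet, Set.mem_ofPred_eq, ← Matrix.ext_iff, funext_iff, etaM, eps5]
  simp [Fin.forall_fin_succ, Matrix.mul_apply, Matrix.mulVec, Matrix.vecMul, dotProduct,
    Fin.sum_univ_succ]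
  constructor <;> intro h <;> grind

theorem add_mem_lagSet {a b : Matrix (Fin 6) (Fin 6) ℝ} (ha : a ∈ lagSet) (hb : b ∈ lagSet) :
    a + b ∈ lagSet := by
  refine ⟨?_, by rw [add_mulVec, ha.2, hb.2, add_zero]⟩
  calc (a + b)ᵀ * etaM + etaM * (a + b)
      = (aᵀ * etaM + etaM * a) + (bᵀ * etaM + etaM * b) := by
        rw [transpose_add]; noncomm_ring
    _ = 0 := by rw [ha.1, hb.1, add_zero]

theorem smul_mem_lagSet (c : ℝ) {a : Matrix (Fin 6) (Fin 6) ℝ} (ha : a ∈ lagSet) :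
    c • a ∈ lagSet := by
  refine ⟨?_, by rw [smul_mulVec, ha.2, smul_zero]⟩
  rw [transpose_smul, smul_mul, Matrix.mul_smul, ← smul_add, ha.1, smul_zero]

theorem zero_mem_lagSet : (0 : Matrix (Fin 6) (Fin 6) ℝ) ∈ lagSet := by
  simp [lagSet]

theorem commutator_mem_lagSet {a b : Matrix (Fin 6) (Fin 6) ℝ} (ha : a ∈ lagSet)
    (hb : b ∈ lagSet) : a * b - b * a ∈ lagSet := by
  refine ⟨?_, by simp [sub_mulVec, ← mulVec_mulVec, ha.2, hb.2]⟩
  calc (a * b - b * a)ᵀ * etaM + etaM * (a * b - b * a)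
      = bᵀ * (aᵀ * etaM + etaM * a) - aᵀ * (bᵀ * etaM + etaM * b)
        - (bᵀ * etaM + etaM * b) * a + (aᵀ * etaM + etaM * a) * b := by
        rw [transpose_sub, transpose_mul, transpose_mul]; noncomm_ring
    _ = 0 := by simp [ha.1, hb.1]

/-- The parametrization of `𝔩` by the entries
`a¹₀, a²₀, a³₀, a⁴₀, a¹₁, a¹₂, a¹₃, a²₁, a³₁, a³₂`, in this order. -/
def lagParam : (Fin 10 → ℝ) →ₗ[ℝ] Matrix (Fin 6) (Fin 6) ℝ where
  toFun p :=
    !![0, 0, 0, 0, 0, 0;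
       p 0, p 4, p 5, p 6, 0, 0;
       p 1, p 7, 0, -p 9, p 5, 0;
       p 2, p 8, p 9, 0, p 6, 0;
       p 3, 0, p 7, p 8, -p 4, 0;
       0, -p 3, p 1, p 2, -p 0, 0]
  map_add' p q := by
    ext i j
    fin_cases i <;> fin_cases j <;> simp [add_comm]
  map_smul' c p := by
    ext i j
    fin_cases i <;> fin_cases j <;> simp

theorem lagParam_apply (p : Fin 10 → ℝ) : lagParam p =
    !![0, 0, 0, 0, 0, 0;
       p 0, p 4, p 5, p 6, 0, 0;
       p 1, p 7, 0, -p 9, p 5, 0;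
       p 2, p 8, p 9, 0, p 6, 0;
       p 3, 0, p 7, p 8, -p 4, 0;
       0, -p 3, p 1, p 2, -p 0, 0] := rfl

/-- The ten free entries of a matrix of `𝔩`. -/
def lagCoords (a : Matrix (Fin 6) (Fin 6) ℝ) : Fin 10 → ℝ :=
  ![a 1 0, a 2 0, a 3 0, a 4 0, a 1 1, a 1 2, a 1 3, a 2 1, a 3 1, a 3 2]

theorem lagCoords_lagParam (p : Fin 10 → ℝ) : lagCoords (lagParam p) = p := by
  ext k
  fin_cases k <;> rfl

theorem lagParam_mem_lagSet (p : Fin 10 → ℝ) : lagParam p ∈ lagSet := by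
  rw [mem_lagSet_iff, lagParam_apply]
  simp [Fin.forall_fin_succ]

theorem lagParam_lagCoords {a : Matrix (Fin 6) (Fin 6) ℝ} (ha : a ∈ lagSet) :
    lagParam (lagCoords a) = a := by
  rw [mem_lagSet_iff] at ha
  ext i j
  fin_cases i <;> fin_cases j <;> simp [lagParam_apply, lagCoords, ha]

theorem coe_range_lagParam : (LinearMap.range lagParam : Set _) = lagSet := by
  ext a
  constructor
  · rintro ⟨p, rfl⟩
    exact lagParam_mem_lagSet p
  · exact fun ha => ⟨lagCoords a, lagParam_lagCoords ha⟩

theorem finrank_range_lagParam : Module.finrank ℝ (LinearMap.range lagParam) = 10 := by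
  rw [LinearMap.finrank_range_of_inj (Function.LeftInverse.injective lagCoords_lagParam)]
  simp

/-- `𝔩 = {a : aᵀη + ηa = 0, aε₅ = 0}` is a Lie subalgebra of `𝔤𝔩(6,ℝ)` (a linear
subspace closed under the matrix commutator) of real dimension 10, and `a ∈ 𝔩` iff
its first row and last column vanish and its remaining entries are determined by
the ten parameters `a¹₀, a²₀, a³₀, a⁴₀, a¹₁, a¹₂, a¹₃, a²₁, a³₁, a³₂` through the
stated relations. -/
theorem stmt16 :
    (∀ a ∈ lagSet, ∀ b ∈ lagSet, a + b ∈ lagSet) ∧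
    (∀ (c : ℝ), ∀ a ∈ lagSet, c • a ∈ lagSet) ∧
    (0 : Matrix (Fin 6) (Fin 6) ℝ) ∈ lagSet ∧
    (∀ a ∈ lagSet, ∀ b ∈ lagSet, a * b - b * a ∈ lagSet) ∧
    (∃ W : Submodule ℝ (Matrix (Fin 6) (Fin 6) ℝ),
      (W : Set (Matrix (Fin 6) (Fin 6) ℝ)) = lagSet ∧ Module.finrank ℝ W = 10) ∧
    (∀ a : Matrix (Fin 6) (Fin 6) ℝ, a ∈ lagSet ↔
      ((∀ j, a 0 j = 0) ∧ (∀ i, a i 5 = 0) ∧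
       a 1 4 = 0 ∧ a 4 1 = 0 ∧ a 5 0 = 0 ∧
       a 2 2 = 0 ∧ a 3 3 = 0 ∧
       a 4 4 = -(a 1 1) ∧ a 2 3 = -(a 3 2) ∧
       a 4 2 = a 2 1 ∧ a 4 3 = a 3 1 ∧
       a 2 4 = a 1 2 ∧ a 3 4 = a 1 3 ∧
       a 5 1 = -(a 4 0) ∧ a 5 2 = a 2 0 ∧ a 5 3 = a 3 0 ∧ a 5 4 = -(a 1 0))) := by
  exact ⟨fun _ ha _ hb => add_mem_lagSet ha hb, fun c _ ha => smul_mem_lagSet c ha,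
    zero_mem_lagSet, fun _ ha _ hb => commutator_mem_lagSet ha hb,
    ⟨LinearMap.range lagParam, coe_range_lagParam, finrank_range_lagParam⟩, mem_lagSet_iff⟩
end

section
/- Let U ⊆ ℝ² be open and u : U → ℝ smooth. With F = e^{−2u} Δu, P = −e^{2u}(∂ₓF + 4 uₓ F) and Q = e^{2u}(∂_y F + 4 u_y F), one has the identity ∂ₓQ − ∂_y P = 2 Δ( e^{−u} ∂ₓ∂_y (e^{u}) ) on U. Consequently the 1-form η_Φ = P dx + Q dy is closed if and only if u satisfies the Blaschke equation Δ( e^{−u} (e^{u})_{xy} ) = 0, the completely integrable equation governing L-isothermic surfaces. -/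
/-- Partial derivative in the `x`-direction of a function on `ℝ²`. -/
noncomputable def pdx (f : ℝ × ℝ → ℝ) : ℝ × ℝ → ℝ := fun p => fderiv ℝ f p (1, 0)

/-- Partial derivative in the `y`-direction of a function on `ℝ²`. -/
noncomputable def pdy (f : ℝ × ℝ → ℝ) : ℝ × ℝ → ℝ := fun p => fderiv ℝ f p (0, 1)

/-- The Laplacian `Δf = ∂ₓ²f + ∂ᵧ²f` of a function on `ℝ²`. -/
noncomputable def lap (f : ℝ × ℝ → ℝ) : ℝ × ℝ → ℝ :=
  fun p => pdx (pdx f) p + pdy (pdy f) p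

/-- `F = e^{−2u} Δu`. -/
noncomputable def Ffun (u : ℝ × ℝ → ℝ) : ℝ × ℝ → ℝ :=
  fun p => Real.exp (-(2 * u p)) * lap u p

open Set

section DirectionalDerivative

variable {E : Type*} [NormedAddCommGroup E] [NormedSpace ℝ E] {U : Set E} {f g : E → ℝ}

/-- The derivative of `f` in the direction `v`. -/
noncomputable def dirD (v : E) (f : E → ℝ) : E → ℝ := fun p => fderiv ℝ f p v

theorem ContDiffOn.dirD (hU : IsOpen U) (hf : ContDiffOn ℝ (⊤ : ℕ∞) f U) (v : E) :
    ContDiffOn ℝ (⊤ : ℕ∞) (dirD v f) U :=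
  (hf.fderiv_of_isOpen hU (by simp)).clm_apply contDiffOn_const

theorem ContDiffOn.differentiableAt_of_isOpen (hU : IsOpen U)
    (hf : ContDiffOn ℝ (⊤ : ℕ∞) f U) {p : E} (hp : p ∈ U) : DifferentiableAt ℝ f p :=
  (hf.contDiffAt (hU.mem_nhds hp)).differentiableAt (by simp)

theorem Set.EqOn.dirD (hU : IsOpen U) (hfg : EqOn f g U) (v : E) :
    EqOn (dirD v f) (dirD v g) U := fun _ hp => by
  simp only [_root_.dirD, (hfg.eventuallyEq_of_mem (hU.mem_nhds hp)).fderiv_eq]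

theorem dirD_add (hU : IsOpen U) (hf : ContDiffOn ℝ (⊤ : ℕ∞) f U)
    (hg : ContDiffOn ℝ (⊤ : ℕ∞) g U) (v : E) :
    EqOn (dirD v (fun q => f q + g q)) (fun q => dirD v f q + dirD v g q) U := fun p hp => by
  have hf' := hf.differentiableAt_of_isOpen hU hp
  have hg' := hg.differentiableAt_of_isOpen hU hp
  simp [dirD, fderiv_fun_add hf' hg']

theorem dirD_neg (v : E) : dirD v (fun q => -f q) = fun q => -dirD v f q := by
  funext p
  simp [dirD, fderiv_fun_neg]

theorem dirD_mul (hU : IsOpen U) (hf : ContDiffOn ℝ (⊤ : ℕ∞) f U)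
    (hg : ContDiffOn ℝ (⊤ : ℕ∞) g U) (v : E) :
    EqOn (dirD v (fun q => f q * g q)) (fun q => dirD v f q * g q + f q * dirD v g q) U :=
  fun p hp => by
  have hf' := hf.differentiableAt_of_isOpen hU hp
  have hg' := hg.differentiableAt_of_isOpen hU hp
  simp only [dirD, fderiv_fun_mul hf' hg', add_apply, smul_apply, smul_eq_mul]
  ring

theorem dirD_const_mul (hU : IsOpen U) (hf : ContDiffOn ℝ (⊤ : ℕ∞) f U) (c : ℝ) (v : E) :
    EqOn (dirD v (fun q => c * f q)) (fun q => c * dirD v f q) U := fun p hp => by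
  simp [dirD, fderiv_const_mul (hf.differentiableAt_of_isOpen hU hp)]

theorem dirD_exp (hU : IsOpen U) (hf : ContDiffOn ℝ (⊤ : ℕ∞) f U) (v : E) :
    EqOn (dirD v (fun q => Real.exp (f q))) (fun q => Real.exp (f q) * dirD v f q) U :=
  fun p hp => by
  simp [dirD, fderiv_exp (hf.differentiableAt_of_isOpen hU hp)]

theorem dirD_comm (hU : IsOpen U) (hf : ContDiffOn ℝ (⊤ : ℕ∞) f U) (v w : E) :
    EqOn (dirD v (dirD w f)) (dirD w (dirD v f)) U := fun p hp => by
  have hd : DifferentiableAt ℝ (fderiv ℝ f) p :=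
    ((hf.fderiv_of_isOpen (m := 1) hU (WithTop.coe_le_coe.2 le_top)).contDiffAt
      (hU.mem_nhds hp)).differentiableAt one_ne_zero
  have key (a b : E) : dirD a (dirD b f) p = fderiv ℝ (fderiv ℝ f) p a b := by
    change fderiv ℝ (fun q => fderiv ℝ f q b) p a = _
    simp [fderiv_clm_apply hd (differentiableAt_const b)]
  rw [key, key]
  refine ((hf.contDiffAt (hU.mem_nhds hp)).isSymmSndFDerivAt ?_).eq v w
  simp only [minSmoothness_of_isRCLikeNormedField]
  exact WithTop.coe_le_coe.2 le_top

theorem dirD_dirD_mul (hU : IsOpen U) (hf : ContDiffOn ℝ (⊤ : ℕ∞) f U)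
    (hg : ContDiffOn ℝ (⊤ : ℕ∞) g U) (v : E) :
    EqOn (dirD v (dirD v (fun q => f q * g q)))
      (fun q => dirD v (dirD v f) q * g q + 2 * (dirD v f q * dirD v g q) +
        f q * dirD v (dirD v g) q) U := fun p hp => by
  have hf' := hf.dirD hU v
  have hg' := hg.dirD hU v
  rw [(dirD_mul hU hf hg v).dirD hU v hp, dirD_add hU (hf'.mul hg) (hf.mul hg') v hp]
  simp only [dirD_mul hU hf' hg v hp, dirD_mul hU hf hg' v hp]
  ring

/-- With `F = e^{-2u} L`, one has `e^{2u}(∂ᵥF + 4 (∂ᵥu) F) = ∂ᵥL + 2 (∂ᵥu) L`. -/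
theorem exp_two_mul_mul_dirD_add (hU : IsOpen U) {u L : E → ℝ}
    (hu : ContDiffOn ℝ (⊤ : ℕ∞) u U) (hL : ContDiffOn ℝ (⊤ : ℕ∞) L U) (v : E) :
    EqOn (fun q => Real.exp (2 * u q) * (dirD v (fun z => Real.exp (-(2 * u z)) * L z) q +
        4 * dirD v u q * (Real.exp (-(2 * u q)) * L q)))
      (fun q => dirD v L q + 2 * (dirD v u q * L q)) U := fun p hp => by
  have h2u : ContDiffOn ℝ (⊤ : ℕ∞) (fun q => 2 * u q) U := contDiffOn_const.mul hu
  have he : Real.exp (2 * u p) * Real.exp (-(2 * u p)) = 1 := by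
    rw [← Real.exp_add, add_neg_cancel, Real.exp_zero]
  simp only [dirD_mul hU h2u.neg.exp hL v hp, dirD_exp hU h2u.neg v hp, dirD_neg,
    dirD_const_mul hU hu 2 v hp]
  linear_combination (dirD v L p + 2 * (dirD v u p * L p)) * he

theorem dirD_exp_two_mul_mul_dirD_add (hU : IsOpen U) {u L : E → ℝ}
    (hu : ContDiffOn ℝ (⊤ : ℕ∞) u U) (hL : ContDiffOn ℝ (⊤ : ℕ∞) L U) (v w : E) :
    EqOn (dirD w (fun q => Real.exp (2 * u q) *
        (dirD v (fun z => Real.exp (-(2 * u z)) * L z) q +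
          4 * dirD v u q * (Real.exp (-(2 * u q)) * L q))))
      (fun q => dirD w (dirD v L) q +
        2 * (dirD w (dirD v u) q * L q + dirD v u q * dirD w L q)) U := fun p hp => by
  have hm := (hu.dirD hU v).mul hL
  rw [(exp_two_mul_mul_dirD_add hU hu hL v).dirD hU w hp,
    dirD_add hU (hL.dirD hU v) (contDiffOn_const.mul hm) w hp]
  simp only [dirD_const_mul hU hm 2 w hp, dirD_mul hU (hu.dirD hU v) hL w hp]

/-- `e^{-u} ∂ᵥ∂_w e^{u} = ∂ᵥ∂_w u + ∂ᵥu ∂_w u`. -/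
theorem exp_neg_mul_dirD_dirD_exp (hU : IsOpen U) {u : E → ℝ}
    (hu : ContDiffOn ℝ (⊤ : ℕ∞) u U) (v w : E) :
    EqOn (fun q => Real.exp (-(u q)) * dirD v (dirD w (fun z => Real.exp (u z))) q)
      (fun q => dirD v (dirD w u) q + dirD v u q * dirD w u q) U := fun p hp => by
  have he : Real.exp (-(u p)) * Real.exp (u p) = 1 := by
    rw [← Real.exp_add, neg_add_cancel, Real.exp_zero]
  simp only [(dirD_exp hU hu w).dirD hU v hp, dirD_mul hU hu.exp (hu.dirD hU w) v hp,
    dirD_exp hU hu v hp]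
  linear_combination (dirD v (dirD w u) p + dirD v u p * dirD w u p) * he

end DirectionalDerivative

section Laplacian

variable {U : Set (ℝ × ℝ)} {f g : ℝ × ℝ → ℝ}

theorem pdx_eq_dirD : pdx = dirD (1, 0) := rfl

theorem pdy_eq_dirD : pdy = dirD (0, 1) := rfl

theorem ContDiffOn.lap (hU : IsOpen U) (hf : ContDiffOn ℝ (⊤ : ℕ∞) f U) :
    ContDiffOn ℝ (⊤ : ℕ∞) (lap f) U :=
  ((hf.dirD hU _).dirD hU _).add ((hf.dirD hU _).dirD hU _)

theorem Set.EqOn.lap (hU : IsOpen U) (hfg : EqOn f g U) : EqOn (lap f) (lap g) U :=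
  fun _ hp => congrArg₂ (· + ·) ((hfg.dirD hU _).dirD hU _ hp) ((hfg.dirD hU _).dirD hU _ hp)

theorem lap_dirD (hU : IsOpen U) (hf : ContDiffOn ℝ (⊤ : ℕ∞) f U) (v : ℝ × ℝ) :
    EqOn (lap (dirD v f)) (dirD v (lap f)) U := fun p hp => by
  have key (w : ℝ × ℝ) : dirD w (dirD w (dirD v f)) p = dirD v (dirD w (dirD w f)) p := by
    rw [(dirD_comm hU hf w v).dirD hU w hp, dirD_comm hU (hf.dirD hU w) w v hp]
  change dirD _ (dirD _ (dirD v f)) p + dirD _ (dirD _ (dirD v f)) p = _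
  rw [key, key]
  exact (dirD_add hU ((hf.dirD hU _).dirD hU _) ((hf.dirD hU _).dirD hU _) v hp).symm

theorem lap_add (hU : IsOpen U) (hf : ContDiffOn ℝ (⊤ : ℕ∞) f U)
    (hg : ContDiffOn ℝ (⊤ : ℕ∞) g U) :
    EqOn (lap (fun q => f q + g q)) (fun q => lap f q + lap g q) U := fun p hp => by
  have key (w : ℝ × ℝ) : dirD w (dirD w (fun q => f q + g q)) p =
      dirD w (dirD w f) p + dirD w (dirD w g) p := by
    rw [(dirD_add hU hf hg w).dirD hU w hp, dirD_add hU (hf.dirD hU w) (hg.dirD hU w) w hp]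
  simp only [lap, pdx_eq_dirD, pdy_eq_dirD, key]
  ring

theorem lap_mul (hU : IsOpen U) (hf : ContDiffOn ℝ (⊤ : ℕ∞) f U)
    (hg : ContDiffOn ℝ (⊤ : ℕ∞) g U) :
    EqOn (lap (fun q => f q * g q))
      (fun q => lap f q * g q + 2 * (pdx f q * pdx g q + pdy f q * pdy g q) + f q * lap g q)
      U := fun p hp => by
  simp only [lap, pdx_eq_dirD, pdy_eq_dirD, dirD_dirD_mul hU hf hg _ hp]
  ring

end Laplacian

/-- With `F = e^{−2u}Δu`, `P = −e^{2u}(∂ₓF + 4uₓF)` and `Q = e^{2u}(∂ᵧF + 4uᵧF)`,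
one has `∂ₓQ − ∂ᵧP = 2Δ(e^{−u} ∂ₓ∂ᵧ(e^{u}))` on `U`; consequently the 1-form
`η_Φ = P dx + Q dy` is closed iff `u` satisfies the Blaschke equation
`Δ(e^{−u}(e^{u})_{xy}) = 0`. -/
theorem stmt17 (U : Set (ℝ × ℝ)) (hU : IsOpen U) (u : ℝ × ℝ → ℝ)
    (hu : ContDiffOn ℝ (⊤ : ℕ∞) u U) :
    ∀ p ∈ U,
      pdx (fun q => Real.exp (2 * u q) *
        (pdy (Ffun u) q + 4 * pdy u q * Ffun u q)) p -
      pdy (fun q => -Real.exp (2 * u q) *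
        (pdx (Ffun u) q + 4 * pdx u q * Ffun u q)) p =
      2 * lap (fun q => Real.exp (-(u q)) *
        pdx (pdy (fun z => Real.exp (u z))) q) p := by
  intro p hp
  have hL := hu.lap hU
  have hx := hu.dirD hU (1, 0)
  have hy := hu.dirD hU (0, 1)
  have hP : (fun q => -Real.exp (2 * u q) * (pdx (Ffun u) q + 4 * pdx u q * Ffun u q)) =
      fun q => -(Real.exp (2 * u q) * (pdx (Ffun u) q + 4 * pdx u q * Ffun u q)) := by
    funext q
    ring
  have hB := (exp_neg_mul_dirD_dirD_exp hU hu (1, 0) (0, 1)).lap hU hp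
  rw [lap_add hU (hy.dirD hU _) (hx.mul hy) hp] at hB
  simp only [lap_mul hU hx hy hp, lap_dirD hU hy _ hp, (lap_dirD hU hu _).dirD hU _ hp,
    lap_dirD hU hu _ hp, pdx_eq_dirD, pdy_eq_dirD] at hB
  rw [hP]
  simp only [pdx_eq_dirD, pdy_eq_dirD, dirD_neg]
  rw [hB]
  have hQx := dirD_exp_two_mul_mul_dirD_add hU hu hL (0, 1) (1, 0) hp
  have hPy := dirD_exp_two_mul_mul_dirD_add hU hu hL (1, 0) (0, 1) hp
  have hLc := dirD_comm hU hL (0, 1) (1, 0) hp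
  have huc := dirD_comm hU hu (0, 1) (1, 0) hp
  have hl : lap u p = dirD (1, 0) (dirD (1, 0) u) p + dirD (0, 1) (dirD (0, 1) u) p := rfl
  change dirD (1, 0) (fun q => Real.exp (2 * u q) *
      (dirD (0, 1) (fun z => Real.exp (-(2 * u z)) * lap u z) q +
        4 * dirD (0, 1) u q * (Real.exp (-(2 * u q)) * lap u q))) p -
    -dirD (0, 1) (fun q => Real.exp (2 * u q) *
      (dirD (1, 0) (fun z => Real.exp (-(2 * u z)) * lap u z) q +
        4 * dirD (1, 0) u q * (Real.exp (-(2 * u q)) * lap u q))) p = _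
  rw [hQx, hPy]
  simp only [hLc, huc, hl]
  ring
end

section
/- Let U ⊆ ℝ² be open, let u, 𝒦 : U → ℝ be smooth, and suppose ∂ₓ𝒦 = −(1/2) e^{2u}(∂ₓF + 4uₓF) and ∂_y𝒦 = (1/2) e^{2u}(∂_yF + 4u_yF), where F = e^{−2u}Δu. Set W = 𝒦 e^{−2u} and J = −(1/2) e^{−2u} Δu. Define 6×6 matrix-valued functions A and B on U as follows (rows and columns indexed 0,…,5, all unlisted entries zero): A has row 1 = (0, 2uₓ, (W+J)e^{u}, 0, 0, 0), row 2 = (e^{u}, e^{u}, 0, u_y, (W+J)e^{u}, 0), row 3 = (0, 0, −u_y, 0, 0, 0), row 4 = (0, 0, e^{u}, 0, −2uₓ, 0), row 5 = (0, 0, e^{u}, 0, 0, 0); B has row 1 = (0, 2u_y, 0, (W−J)e^{u}, 0, 0), row 2 = (0, 0, 0, −uₓ, 0, 0), row 3 = (e^{u}, −e^{u}, uₓ, 0, (W−J)e^{u}, 0), row 4 = (0, 0, 0, −e^{u}, −2u_y, 0), row 5 = (0, 0, 0, e^{u}, 0, 0). Then ∂ₓB − ∂_yA + AB − BA = 0 on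 U; that is, the 𝔩-valued 1-form α = A dx + B dy satisfies the Maurer–Cartan integrability condition dα + α ∧ α = 0. -/
/-- `W = 𝒦 e^{−2u}`. -/
noncomputable def Wfun (u K : ℝ × ℝ → ℝ) : ℝ × ℝ → ℝ :=
  fun p => K p * Real.exp (-(2 * u p))

/-- `J = −(1/2) e^{−2u} Δu`. -/
noncomputable def Jfun (u : ℝ × ℝ → ℝ) : ℝ × ℝ → ℝ :=
  fun p => -(1/2) * Real.exp (-(2 * u p)) * lap u p

/-- The `dx`-part `A` of the 𝔩-valued 1-form `α = A dx + B dy`. -/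
noncomputable def Amat (u K : ℝ × ℝ → ℝ) (p : ℝ × ℝ) : Matrix (Fin 6) (Fin 6) ℝ :=
  let eu := Real.exp (u p)
  let ux := pdx u p
  let uy := pdy u p
  let w := Wfun u K p
  let j := Jfun u p
  !![0, 0, 0, 0, 0, 0;
     0, 2 * ux, (w + j) * eu, 0, 0, 0;
     eu, eu, 0, uy, (w + j) * eu, 0;
     0, 0, -uy, 0, 0, 0;
     0, 0, eu, 0, -(2 * ux), 0;
     0, 0, eu, 0, 0, 0]

/-- The `dy`-part `B` of the 𝔩-valued 1-form `α = A dx + B dy`. -/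
noncomputable def Bmat (u K : ℝ × ℝ → ℝ) (p : ℝ × ℝ) : Matrix (Fin 6) (Fin 6) ℝ :=
  let eu := Real.exp (u p)
  let ux := pdx u p
  let uy := pdy u p
  let w := Wfun u K p
  let j := Jfun u p
  !![0, 0, 0, 0, 0, 0;
     0, 2 * uy, 0, (w - j) * eu, 0, 0;
     0, 0, 0, -ux, 0, 0;
     eu, -eu, ux, 0, (w - j) * eu, 0;
     0, 0, 0, -eu, -(2 * uy), 0;
     0, 0, 0, eu, 0, 0]

section PartialDerivatives

variable {f g : ℝ × ℝ → ℝ} {p : ℝ × ℝ}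

lemma ContDiffAt.pdx (hf : ContDiffAt ℝ (⊤ : ℕ∞) f p) : ContDiffAt ℝ (⊤ : ℕ∞) (pdx f) p :=
  (hf.fderiv_right (m := (⊤ : ℕ∞)) (by norm_cast)).clm_apply contDiffAt_const

lemma ContDiffAt.pdy (hf : ContDiffAt ℝ (⊤ : ℕ∞) f p) : ContDiffAt ℝ (⊤ : ℕ∞) (pdy f) p :=
  (hf.fderiv_right (m := (⊤ : ℕ∞)) (by norm_cast)).clm_apply contDiffAt_const

/-- Mixed partial derivatives of a smooth function commute. -/
lemma pdx_pdy_comm (hf : ContDiffAt ℝ (⊤ : ℕ∞) f p) : pdx (pdy f) p = pdy (pdx f) p := by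
  have hd : DifferentiableAt ℝ (fderiv ℝ f) p :=
    (hf.fderiv_right (m := (⊤ : ℕ∞)) (by norm_cast)).differentiableAt (by simp)
  have hs : IsSymmSndFDerivAt ℝ f p := hf.isSymmSndFDerivAt (by
    rw [minSmoothness_of_isRCLikeNormedField]
    exact WithTop.coe_le_coe.2 (le_top : (2 : ℕ∞) ≤ ⊤))
  have key : ∀ v w : ℝ × ℝ,
      fderiv ℝ (fun q => fderiv ℝ f q v) p w = fderiv ℝ (fderiv ℝ f) p w v := by
    intro v w
    rw [fderiv_clm_apply hd (differentiableAt_const v)]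
    simp
  change fderiv ℝ (fun q => fderiv ℝ f q (0, 1)) p (1, 0) =
    fderiv ℝ (fun q => fderiv ℝ f q (1, 0)) p (0, 1)
  rw [key, key, hs.eq]

lemma pdx_const (c : ℝ) : pdx (fun _ => c) p = 0 := by
  simp [pdx]

lemma pdx_neg : pdx (fun q => -f q) p = -pdx f p := by
  simp [pdx, fderiv_fun_neg]

lemma pdx_const_mul (c : ℝ) (hf : DifferentiableAt ℝ f p) :
    pdx (fun q => c * f q) p = c * pdx f p := by
  simp [pdx, fderiv_const_mul hf]

lemma pdx_add (hf : DifferentiableAt ℝ f p) (hg : DifferentiableAt ℝ g p) :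
    pdx (fun q => f q + g q) p = pdx f p + pdx g p := by
  simp [pdx, fderiv_fun_add hf hg]

lemma pdx_mul (hf : DifferentiableAt ℝ f p) (hg : DifferentiableAt ℝ g p) :
    pdx (fun q => f q * g q) p = f p * pdx g p + g p * pdx f p := by
  simp [pdx, fderiv_fun_mul hf hg]

lemma pdx_exp (hf : DifferentiableAt ℝ f p) :
    pdx (fun q => Real.exp (f q)) p = Real.exp (f p) * pdx f p := by
  simp [pdx, fderiv_exp hf]

lemma pdy_const (c : ℝ) : pdy (fun _ => c) p = 0 := by
  simp [pdy]

lemma pdy_neg : pdy (fun q => -f q) p = -pdy f p := by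
  simp [pdy, fderiv_fun_neg]

lemma pdy_const_mul (c : ℝ) (hf : DifferentiableAt ℝ f p) :
    pdy (fun q => c * f q) p = c * pdy f p := by
  simp [pdy, fderiv_const_mul hf]

lemma pdy_add (hf : DifferentiableAt ℝ f p) (hg : DifferentiableAt ℝ g p) :
    pdy (fun q => f q + g q) p = pdy f p + pdy g p := by
  simp [pdy, fderiv_fun_add hf hg]

lemma pdy_mul (hf : DifferentiableAt ℝ f p) (hg : DifferentiableAt ℝ g p) :
    pdy (fun q => f q * g q) p = f p * pdy g p + g p * pdy f p := by
  simp [pdy, fderiv_fun_mul hf hg]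

lemma pdy_exp (hf : DifferentiableAt ℝ f p) :
    pdy (fun q => Real.exp (f q)) p = Real.exp (f p) * pdy f p := by
  simp [pdy, fderiv_exp hf]

end PartialDerivatives

lemma Jfun_eq (u : ℝ × ℝ → ℝ) : Jfun u = fun p => -(1/2) * Ffun u p := by
  funext p
  simp only [Jfun, Ffun]
  ring

lemma ContDiffAt.Ffun {u : ℝ × ℝ → ℝ} {p : ℝ × ℝ} (hu : ContDiffAt ℝ (⊤ : ℕ∞) u p) :
    ContDiffAt ℝ (⊤ : ℕ∞) (Ffun u) p :=
  (contDiffAt_const.mul hu).neg.exp.mul (hu.pdx.pdx.add hu.pdy.pdy)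

set_option maxHeartbeats 1000000 in
/-- If `∂ₓ𝒦 = −(1/2)e^{2u}(∂ₓF + 4uₓF)` and `∂ᵧ𝒦 = (1/2)e^{2u}(∂ᵧF + 4uᵧF)` with
`F = e^{−2u}Δu`, then the 𝔩-valued 1-form `α = A dx + B dy` built from
`W = 𝒦e^{−2u}` and `J = −(1/2)e^{−2u}Δu` satisfies the Maurer–Cartan integrability
condition `∂ₓB − ∂ᵧA + AB − BA = 0` on `U`, i.e. `dα + α ∧ α = 0`. -/
theorem stmt18 (U : Set (ℝ × ℝ)) (hU : IsOpen U) (u K : ℝ × ℝ → ℝ)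
    (hu : ContDiffOn ℝ (⊤ : ℕ∞) u U) (hK : ContDiffOn ℝ (⊤ : ℕ∞) K U)
    (hKx : ∀ p ∈ U, pdx K p =
      -(1/2) * Real.exp (2 * u p) * (pdx (Ffun u) p + 4 * pdx u p * Ffun u p))
    (hKy : ∀ p ∈ U, pdy K p =
      (1/2) * Real.exp (2 * u p) * (pdy (Ffun u) p + 4 * pdy u p * Ffun u p)) :
    ∀ p ∈ U, ∀ i j : Fin 6,
      pdx (fun q => Bmat u K q i j) p - pdy (fun q => Amat u K q i j) p +
        (Amat u K p * Bmat u K p - Bmat u K p * Amat u K p) i j = 0 := by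
  intro p hp
  have hu' : ContDiffAt ℝ (⊤ : ℕ∞) u p := hu.contDiffAt (hU.mem_nhds hp)
  have hK' : ContDiffAt ℝ (⊤ : ℕ∞) K p := hK.contDiffAt (hU.mem_nhds hp)
  have du : DifferentiableAt ℝ u p := hu'.differentiableAt (by simp)
  have dK : DifferentiableAt ℝ K p := hK'.differentiableAt (by simp)
  have dux : DifferentiableAt ℝ (pdx u) p := hu'.pdx.differentiableAt (by simp)
  have duy : DifferentiableAt ℝ (pdy u) p := hu'.pdy.differentiableAt (by simp)
  have dF : DifferentiableAt ℝ (Ffun u) p := hu'.Ffun.differentiableAt (by simp)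
  have dJ : DifferentiableAt ℝ (Jfun u) p := by
    rw [Jfun_eq]
    exact dF.const_mul _
  have d2u : DifferentiableAt ℝ (fun q => 2 * u q) p := du.const_mul 2
  have dE : DifferentiableAt ℝ (fun q => Real.exp (-(2 * u q))) p := d2u.neg.exp
  have de : DifferentiableAt ℝ (fun q => Real.exp (u q)) p := du.exp
  have dW : DifferentiableAt ℝ (Wfun u K) p := dK.mul dE
  have hcomm := pdx_pdy_comm hu'
  have hE : Real.exp (2 * u p) * Real.exp (-(2 * u p)) = 1 := by
    rw [← Real.exp_add, add_neg_cancel, Real.exp_zero]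
  have hee : Real.exp (2 * u p) = Real.exp (u p) * Real.exp (u p) := by
    rw [← Real.exp_add, two_mul]
  have hlap : pdx (pdx u) p + pdy (pdy u) p =
      -2 * Jfun u p * (Real.exp (u p) * Real.exp (u p)) := by
    rw [← hee]
    change lap u p = _
    simp only [Jfun]
    linear_combination -(lap u p) * hE
  have hFJ : Ffun u p = -2 * Jfun u p := by
    rw [Jfun_eq]
    ring
  have hWx : pdx (Wfun u K) p = pdx (Jfun u) p + 4 * pdx u p * Jfun u p
      - 2 * pdx u p * Wfun u K p := by
    have hW : pdx (Wfun u K) p = _ := pdx_mul dK dE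
    rw [hW, pdx_exp d2u.fun_neg, pdx_neg, pdx_const_mul 2 du, hKx p hp, hFJ, Jfun_eq,
      pdx_const_mul _ dF]
    simp only [Wfun]
    linear_combination (-(1/2) * (pdx (Ffun u) p + 4 * pdx u p * Ffun u p)) * hE
  have hWy : pdy (Wfun u K) p = -pdy (Jfun u) p - 4 * pdy u p * Jfun u p
      - 2 * pdy u p * Wfun u K p := by
    have hW : pdy (Wfun u K) p = _ := pdy_mul dK dE
    rw [hW, pdy_exp d2u.fun_neg, pdy_neg, pdy_const_mul 2 du, hKy p hp, hFJ, Jfun_eq,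
      pdy_const_mul _ dF]
    simp only [Wfun]
    linear_combination ((1/2) * (pdy (Ffun u) p + 4 * pdy u p * Ffun u p)) * hE
  have hB : pdx (fun q => (Wfun u K q - Jfun u q) * Real.exp (u q)) p =
      (3 * Jfun u p - Wfun u K p) * pdx u p * Real.exp (u p) := by
    simp only [sub_eq_add_neg (Wfun u K _)]
    rw [pdx_mul (dW.fun_add dJ.fun_neg) de, pdx_add dW dJ.fun_neg, pdx_neg, pdx_exp du, hWx]
    ring
  have hA : pdy (fun q => (Wfun u K q + Jfun u q) * Real.exp (u q)) p =
      -(Wfun u K p + 3 * Jfun u p) * pdy u p * Real.exp (u p) := by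
    rw [pdy_mul (dW.fun_add dJ) de, pdy_add dW dJ, pdy_exp du, hWy]
    ring
  intro i j
  fin_cases i <;> fin_cases j <;>
    simp [Amat, Bmat, pdx_const, pdy_const, pdx_neg, pdy_neg,
      pdx_exp du, pdy_exp du, pdx_const_mul 2 duy, pdy_const_mul 2 dux,
      hA, hB, hcomm] <;>
    linarith
end

section
/- Let U ⊆ ℝ² be open and connected and u : U → ℝ smooth. With F = e^{−2u}Δu, the two functions ∂ₓF + 4uₓF and ∂_yF + 4u_yF vanish identically on U (equivalently, the 1-form η_Φ vanishes identically) if and only if there exists a constant c ∈ ℝ such that Δu = c e^{−2u} on U. In particular, the Blaschke potential Φ = e^{u} of a nondegenerate L-minimal isothermic surface satisfies Δu = c e^{−2u} for some constant c, i.e. every nondegenerate L-minimal isothermic surface is special L-isothermic. -/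
open scoped ContDiff

theorem ContDiffOn.fderiv_apply_const {U : Set (ℝ × ℝ)} (hU : IsOpen U) {f : ℝ × ℝ → ℝ}
    (hf : ContDiffOn ℝ ∞ f U) (v : ℝ × ℝ) :
    ContDiffOn ℝ ∞ (fun p => fderiv ℝ f p v) U :=
  (hf.fderiv_of_isOpen hU (by simp)).clm_apply contDiffOn_const

theorem contDiffOn_Ffun {U : Set (ℝ × ℝ)} (hU : IsOpen U) {u : ℝ × ℝ → ℝ}
    (hu : ContDiffOn ℝ ∞ u U) : ContDiffOn ℝ ∞ (Ffun u) U :=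
  (contDiffOn_const.mul hu).neg.exp.mul
    (((hu.fderiv_apply_const hU _).fderiv_apply_const hU _).add
      ((hu.fderiv_apply_const hU _).fderiv_apply_const hU _))

theorem fderiv_exp_four_mul_mul_apply {u F : ℝ × ℝ → ℝ} {p : ℝ × ℝ}
    (hu : DifferentiableAt ℝ u p) (hF : DifferentiableAt ℝ F p) (v : ℝ × ℝ) :
    fderiv ℝ (fun q => Real.exp (4 * u q) * F q) p v =
      Real.exp (4 * u p) * (fderiv ℝ F p v + 4 * fderiv ℝ u p v * F p) := by
  rw [((hu.hasFDerivAt.const_mul 4).exp.fun_mul hF.hasFDerivAt).fderiv]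
  simp
  ring

theorem exp_four_mul_mul_Ffun_eq_iff (u : ℝ × ℝ → ℝ) (p : ℝ × ℝ) (c : ℝ) :
    Real.exp (4 * u p) * Ffun u p = c ↔ lap u p = c * Real.exp (-(2 * u p)) := by
  have h : Real.exp (4 * u p) * Ffun u p = Real.exp (2 * u p) * lap u p := by
    rw [Ffun, ← mul_assoc, ← Real.exp_add]
    ring_nf
  rw [h, Real.exp_neg, ← div_eq_mul_inv, eq_div_iff (Real.exp_ne_zero _), mul_comm]

/-- The system `∂F + 4F∂u = 0` says that `e^{4u}F` has vanishing differential. -/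
theorem fderiv_exp_four_mul_mul_Ffun_eq_zero_iff {u : ℝ × ℝ → ℝ} {p : ℝ × ℝ}
    (hu : DifferentiableAt ℝ u p) (hF : DifferentiableAt ℝ (Ffun u) p) :
    fderiv ℝ (fun q => Real.exp (4 * u q) * Ffun u q) p = 0 ↔
      pdx (Ffun u) p + 4 * pdx u p * Ffun u p = 0 ∧
      pdy (Ffun u) p + 4 * pdy u p * Ffun u p = 0 := by
  have key := fderiv_exp_four_mul_mul_apply hu hF
  constructor
  · intro h
    simpa [h, pdx, pdy] using And.intro (key (1, 0)) (key (0, 1))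
  · rintro ⟨hx, hy⟩
    unfold pdx at hx
    unfold pdy at hy
    ext
    · simpa [hx] using key (1, 0)
    · simpa [hy] using key (0, 1)

/-- Let `U ⊆ ℝ²` be open and connected and `u` smooth on `U`. With `F = e^{−2u}Δu`,
the functions `∂ₓF + 4uₓF` and `∂ᵧF + 4uᵧF` vanish identically on `U`
(equivalently, the 1-form `η_Φ` vanishes identically) iff there is a constant
`c ∈ ℝ` with `Δu = c e^{−2u}` on `U`: every nondegenerate `L`-minimal isothermic
surface is special `L`-isothermic. -/
theorem stmt19 (U : Set (ℝ × ℝ)) (hU : IsOpen U) (hUc : IsConnected U)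
    (u : ℝ × ℝ → ℝ) (hu : ContDiffOn ℝ (⊤ : ℕ∞) u U) :
    (∀ p ∈ U,
      pdx (Ffun u) p + 4 * pdx u p * Ffun u p = 0 ∧
      pdy (Ffun u) p + 4 * pdy u p * Ffun u p = 0) ↔
    (∃ c : ℝ, ∀ p ∈ U, lap u p = c * Real.exp (-(2 * u p))) := by
  have hF := contDiffOn_Ffun hU hu
  have hud : ∀ p ∈ U, DifferentiableAt ℝ u p := fun p hp =>
    (hu.differentiableOn (by simp)).differentiableAt (hU.mem_nhds hp)
  have hFd : ∀ p ∈ U, DifferentiableAt ℝ (Ffun u) p := fun p hp =>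
    (hF.differentiableOn (by simp)).differentiableAt (hU.mem_nhds hp)
  constructor
  · intro h
    have hG : DifferentiableOn ℝ (fun q => Real.exp (4 * u q) * Ffun u q) U := fun p hp =>
      (((hud p hp).const_mul 4).exp.mul (hFd p hp)).differentiableWithinAt
    obtain ⟨c, hc⟩ := hU.exists_is_const_of_fderiv_eq_zero hUc.isPreconnected hG
      fun p hp => (fderiv_exp_four_mul_mul_Ffun_eq_zero_iff (hud p hp) (hFd p hp)).2 (h p hp)
    exact ⟨c, fun p hp => (exp_four_mul_mul_Ffun_eq_iff u p c).1 (hc p hp)⟩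
  · rintro ⟨c, hc⟩ p hp
    rw [← fderiv_exp_four_mul_mul_Ffun_eq_zero_iff (hud p hp) (hFd p hp)]
    have hG : (fun q => Real.exp (4 * u q) * Ffun u q) =ᶠ[nhds p] fun _ => c := by
      filter_upwards [hU.mem_nhds hp] with q hq
      exact (exp_four_mul_mul_Ffun_eq_iff u q c).2 (hc q hq)
    simp [hG.fderiv_eq]
end
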